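/- arXiv:1908.11000 — 3 statements merged into one kernel-verified Lean document; each statement's English description precedes it below -/
import Mathlib

section
/- The digital image MSS_18 is 18-contractible: there exist a positive integer m and a function F : MSS_18 × {0,1,...,m} → MSS_18 such that (i) F(x,0) = x for all x ∈ MSS_18; (ii) there is a point c ∈ MSS_18 with F(x,m) = c for all x ∈ MSS_18; (iii) for each t ∈ {0,...,m}, the map x ↦ F(x,t) is (18,18)-continuous (i.e., whenever x and x' are 18-adjacent, F(x,t) and F(x',t) are equal or 18-adjacent); and (iv) for each x ∈ MSS_18 and each t ∈ {0,...,m-1}, F(x,t) and F(x,t+1) are equal or 18-adjacent. -/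
/-!
A single map `f` contracts `MSS18` by iteration. It sends
`p4 ↦ p7 ↦ p2`, `p5 ↦ p6 ↦ p1`, `p8 ↦ p2`, `p9 ↦ p1`, `p3 ↦ p2 ↦ p1 ↦ p0` and fixes `p0`:
it rotates the 4-cycles `p1 p6 p5 p9` and `p2 p7 p4 p8` part of the way while pushing their
points `p1`, `p2` towards `p0`. It is (18,18)-continuous (`step_continuous`), moves
each point to an equal or adjacent one (`step_track`), and its fourth iterate is constant. Hence
`F (x, t) = f^[t] x` is a contraction with `m = 4`: each `f^[t]` is continuous as a composition, and
`f^[t] x` is equal or adjacent to `f (f^[t] x)`.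
-/


/-- Two points of ℤ³ are 18-adjacent: they are distinct, each coordinate differs
by at most 1, and at most 2 coordinates differ by exactly 1. -/
def adj18 (x y : ℤ × ℤ × ℤ) : Prop :=
  x ≠ y ∧ |x.1 - y.1| ≤ 1 ∧ |x.2.1 - y.2.1| ≤ 1 ∧ |x.2.2 - y.2.2| ≤ 1 ∧
    ¬(|x.1 - y.1| = 1 ∧ |x.2.1 - y.2.1| = 1 ∧ |x.2.2 - y.2.2| = 1)

/-- Two points of ℤ³ are 26-adjacent: they are distinct and each coordinate
differs by at most 1. -/
def adj26 (x y : ℤ × ℤ × ℤ) : Prop :=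
  x ≠ y ∧ |x.1 - y.1| ≤ 1 ∧ |x.2.1 - y.2.1| ≤ 1 ∧ |x.2.2 - y.2.2| ≤ 1

def p0 : ℤ × ℤ × ℤ := (0, 0, 0)
def p1 : ℤ × ℤ × ℤ := (1, 1, 0)
def p2 : ℤ × ℤ × ℤ := (1, 2, 0)
def p3 : ℤ × ℤ × ℤ := (0, 3, 0)
def p4 : ℤ × ℤ × ℤ := (-1, 2, 0)
def p5 : ℤ × ℤ × ℤ := (-1, 1, 0)
def p6 : ℤ × ℤ × ℤ := (0, 1, -1)
def p7 : ℤ × ℤ × ℤ := (0, 2, -1)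
def p8 : ℤ × ℤ × ℤ := (0, 2, 1)
def p9 : ℤ × ℤ × ℤ := (0, 1, 1)

/-- The 10-point digital model of the 2-sphere. -/
def MSS18 : Set (ℤ × ℤ × ℤ) := {p0, p1, p2, p3, p4, p5, p6, p7, p8, p9}

/-- The points `p0, …, p9`, numbered by `Fin 10`. -/
def pt : Fin 10 → ℤ × ℤ × ℤ := ![p0, p1, p2, p3, p4, p5, p6, p7, p8, p9]

/-- The contracting map `f`, in terms of the numbering `pt`. -/
def step : Fin 10 → Fin 10 := ![0, 0, 1, 2, 7, 6, 1, 2, 2, 1]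

instance (x y : ℤ × ℤ × ℤ) : Decidable (adj18 x y) := by
  unfold adj18
  infer_instance

lemma pt_injective : Function.Injective pt := by
  unfold Function.Injective
  decide +kernel

lemma mem_MSS18_iff {x : ℤ × ℤ × ℤ} : x ∈ MSS18 ↔ ∃ i, pt i = x := by
  simp only [MSS18, Set.mem_insert_iff, Set.mem_singleton_iff, Fin.exists_fin_succ, pt]
  simp [eq_comm]

lemma step_continuous : ∀ i j, pt i = pt j ∨ adj18 (pt i) (pt j) →
    pt (step i) = pt (step j) ∨ adj18 (pt (step i)) (pt (step j)) := by
  decide +kernel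

lemma step_track : ∀ i, pt i = pt (step i) ∨ adj18 (pt i) (pt (step i)) := by
  decide +kernel

lemma step_iterate_four : ∀ i, step^[4] i = 0 := by
  decide +kernel

lemma step_iterate_continuous (t : ℕ) (i j : Fin 10) (h : pt i = pt j ∨ adj18 (pt i) (pt j)) :
    pt (step^[t] i) = pt (step^[t] j) ∨ adj18 (pt (step^[t] i)) (pt (step^[t] j)) := by
  induction t with
  | zero => exact h
  | succ t ih =>
    simp only [Function.iterate_succ_apply']
    exact step_continuous _ _ ih

/-- $MSS_{18}$ is 18-contractible. -/
theorem mss18_is_18_contractible :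
    ∃ m : ℕ, 0 < m ∧ ∃ F : (ℤ × ℤ × ℤ) → ℕ → (ℤ × ℤ × ℤ),
      (∀ x ∈ MSS18, ∀ t ≤ m, F x t ∈ MSS18) ∧
      (∀ x ∈ MSS18, F x 0 = x) ∧
      (∃ c ∈ MSS18, ∀ x ∈ MSS18, F x m = c) ∧
      (∀ t ≤ m, ∀ x ∈ MSS18, ∀ x' ∈ MSS18, adj18 x x' →
        F x t = F x' t ∨ adj18 (F x t) (F x' t)) ∧
      (∀ x ∈ MSS18, ∀ t < m, F x t = F x (t + 1) ∨ adj18 (F x t) (F x (t + 1))) := by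
  -- Off `MSS18` the value of `Function.invFun pt` is arbitrary and plays no role.
  have inv (i : Fin 10) : Function.invFun pt (pt i) = i :=
    Function.leftInverse_invFun pt_injective i
  refine ⟨4, by norm_num, fun x t => pt (step^[t] (Function.invFun pt x)), ?_, ?_, ?_, ?_, ?_⟩
  · exact fun x _ t _ => mem_MSS18_iff.2 ⟨_, rfl⟩
  · intro x hx
    obtain ⟨i, rfl⟩ := mem_MSS18_iff.1 hx
    simp only [inv, Function.iterate_zero, id]
  · exact ⟨pt 0, mem_MSS18_iff.2 ⟨0, rfl⟩, fun _ _ => congrArg pt (step_iterate_four _)⟩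
  · intro t _ x hx y hy hxy
    obtain ⟨i, rfl⟩ := mem_MSS18_iff.1 hx
    obtain ⟨j, rfl⟩ := mem_MSS18_iff.1 hy
    simp only [inv]
    exact step_iterate_continuous t i j (Or.inr hxy)
  · intro x _ t _
    simp only [Function.iterate_succ_apply']
    exact step_track _
end

section
/- The digital image MSS_18 is 26-contractible: there exist a positive integer m and a function F : MSS_18 × {0,1,...,m} → MSS_18 such that (i) F(x,0) = x for all x ∈ MSS_18; (ii) there is a point c ∈ MSS_18 with F(x,m) = c for all x ∈ MSS_18; (iii) for each t ∈ {0,...,m}, the map x ↦ F(x,t) is (26,26)-continuous (i.e., whenever x and x' are 26-adjacent, F(x,t) and F(x',t) are equal or 26-adjacent); and (iv) for each x ∈ MSS_18 and each t ∈ {0,...,m-1}, F(x,t) and F(x,t+1) are equal or 26-adjacent. -/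
instance (x y : ℤ × ℤ × ℤ) : Decidable (adj26 x y) := by
  unfold adj26; infer_instance

/-- The intermediate stage of the contraction: `p3`, `p4`, `p5` go to `p7`, all else to `p1`. -/
def halfCollapse (x : ℤ × ℤ × ℤ) : ℤ × ℤ × ℤ :=
  if x = p3 ∨ x = p4 ∨ x = p5 then p7 else p1

theorem halfCollapse_eq (x : ℤ × ℤ × ℤ) : halfCollapse x = p1 ∨ halfCollapse x = p7 := by
  unfold halfCollapse
  split_ifs <;> simp

theorem eq_or_adj26_halfCollapse {x : ℤ × ℤ × ℤ} (hx : x ∈ MSS18) :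
    x = halfCollapse x ∨ adj26 x (halfCollapse x) := by
  simp only [MSS18, Set.mem_insert_iff, Set.mem_singleton_iff] at hx
  rcases hx with rfl | rfl | rfl | rfl | rfl | rfl | rfl | rfl | rfl | rfl <;> decide

/-- The contraction of `MSS18` to `p1`, constant from time `2` on. -/
def contraction (x : ℤ × ℤ × ℤ) : ℕ → ℤ × ℤ × ℤ
  | 0 => x
  | 1 => halfCollapse x
  | _ + 2 => p1

/-- $MSS_{18}$ is 26-contractible. -/
theorem mss18_is_26_contractible :
    ∃ m : ℕ, 0 < m ∧ ∃ F : (ℤ × ℤ × ℤ) → ℕ → (ℤ × ℤ × ℤ),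
      (∀ x ∈ MSS18, ∀ t ≤ m, F x t ∈ MSS18) ∧
      (∀ x ∈ MSS18, F x 0 = x) ∧
      (∃ c ∈ MSS18, ∀ x ∈ MSS18, F x m = c) ∧
      (∀ t ≤ m, ∀ x ∈ MSS18, ∀ x' ∈ MSS18, adj26 x x' →
        F x t = F x' t ∨ adj26 (F x t) (F x' t)) ∧
      (∀ x ∈ MSS18, ∀ t < m, F x t = F x (t + 1) ∨ adj26 (F x t) (F x (t + 1))) := by
  have h17 : adj26 p1 p7 := by decide
  have h71 : adj26 p7 p1 := by decide
  have h1 : p1 ∈ MSS18 := by simp [MSS18]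
  have h7 : p7 ∈ MSS18 := by simp [MSS18]
  refine ⟨2, by norm_num, contraction, ?_, fun _ _ => rfl, ⟨p1, h1, fun _ _ => rfl⟩, ?_, ?_⟩
  · intro x hx t _
    match t with
    | 0 => exact hx
    | 1 =>
      change halfCollapse x ∈ MSS18
      rcases halfCollapse_eq x with h | h <;> rw [h] <;> assumption
    | _ + 2 => exact h1
  · intro t _ x _ x' _ hadj
    match t with
    | 0 => exact Or.inr hadj
    | 1 =>
      change halfCollapse x = halfCollapse x' ∨ adj26 (halfCollapse x) (halfCollapse x')
      rcases halfCollapse_eq x with h | h <;> rcases halfCollapse_eq x' with h' | h' <;>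
        rw [h, h'] <;> first | exact Or.inl rfl | exact Or.inr ‹_›
    | _ + 2 => exact Or.inl rfl
  · intro x hx t _
    match t with
    | 0 => exact eq_or_adj26_halfCollapse hx
    | 1 =>
      change halfCollapse x = p1 ∨ adj26 (halfCollapse x) p1
      rcases halfCollapse_eq x with h | h <;> rw [h]
      · exact Or.inl rfl
      · exact Or.inr h71
    | _ + 2 => exact Or.inl rfl
end

section
/- Every (2,18)-continuous loop in MSS_18 based at p₆ is 18-nullhomotopic: for every positive integer m and every function f : {0,1,...,m} → MSS_18 with f(0) = f(m) = p₆ and f(t), f(t+1) equal or 18-adjacent for all 0 ≤ t < m, there exist a positive integer k and a function H : {0,...,m} × {0,...,k} → MSS_18 such that H(t,0) = f(t) for all t, H(t,k) = p₆ for all t, H(0,s) = H(m,s) = p₆ for all s ∈ {0,...,k}, for each s the map t ↦ H(t,s) satisfies that H(t,s) and H(t+1,s) are equal or 18-adjacent for all 0 ≤ t < m, and for each t the points H(t,s) and H(t,s+1) are equal or 18-adjacent for all 0 ≤ s < k. -/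
/-- Equal or 18-adjacent. -/
abbrev Near18 (x y : ℤ × ℤ × ℤ) : Prop := x = y ∨ adj18 x y

instance adj18Decidable (x y : ℤ × ℤ × ℤ) : Decidable (adj18 x y) := by
  unfold adj18; infer_instance

/-- `MSS18` as a finset, so that statements about its points can be decided by enumeration. -/
def MSSFin : Finset (ℤ × ℤ × ℤ) := {p0, p1, p2, p3, p4, p5, p6, p7, p8, p9}

lemma mem_MSS18_iff_s12 {x : ℤ × ℤ × ℤ} : x ∈ MSS18 ↔ x ∈ MSSFin := by
  simp [MSS18, MSSFin]

/-- The retraction of `MSS18 \ {p3}` onto the cone `{p0, p1, p5, p6, p9}` along the prism edges. -/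
def flatten (x : ℤ × ℤ × ℤ) : ℤ × ℤ × ℤ :=
  if x = p2 then p1 else if x = p7 then p6 else if x = p4 then p5 else if x = p8 then p9 else x

/-- The retraction of the cone `{p0, p1, p5, p6, p9}` that pushes `p9` to the cone point `p0`. -/
def fold (x : ℤ × ℤ × ℤ) : ℤ × ℤ × ℤ := if x = p9 then p0 else x

set_option synthInstance.maxSize 1000 in
set_option synthInstance.maxHeartbeats 200000 in
/-- Two neighbours of `p3` are joined by a detour through another neighbour `w` of `p3`. -/
lemma exists_detour : ∀ x ∈ MSSFin, ∀ y ∈ MSSFin, x ≠ p3 → y ≠ p3 → Near18 x p3 → Near18 p3 y →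
    ∃ w ∈ MSSFin, w ≠ p3 ∧ Near18 x w ∧ Near18 w y ∧ Near18 p3 w := by
  decide +kernel

lemma flatten_spec : ∀ x ∈ MSSFin, x ≠ p3 →
    flatten x ∈ MSSFin ∧ fold (flatten x) ∈ MSSFin ∧ Near18 x (flatten x) ∧
      Near18 (flatten x) (fold (flatten x)) ∧ Near18 (fold (flatten x)) p6 := by
  decide +kernel

lemma flatten_near : ∀ x ∈ MSSFin, ∀ y ∈ MSSFin, x ≠ p3 → y ≠ p3 → Near18 x y →
    Near18 (flatten x) (flatten y) ∧ Near18 (fold (flatten x)) (fold (flatten y)) := by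
  decide +kernel

/-- A path `f` can be pushed off `p3` in one homotopy step, leaving it unchanged wherever it is
not at `p3`. The freely chosen `v` is the prospective next point of the path: when `f` ends in
the middle of a run at `p3`, the vertex replacing that run must be compatible with the exit
point. -/
lemma exists_avoiding (f : ℕ → ℤ × ℤ × ℤ) (hf0 : f 0 ≠ p3) (n : ℕ)
    (hf : ∀ t ≤ n, f t ∈ MSSFin) (hadj : ∀ t < n, Near18 (f t) (f (t + 1))) :
    ∀ v ∈ MSSFin, v ≠ p3 → Near18 (f n) v →
      ∃ g : ℕ → ℤ × ℤ × ℤ,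
        (∀ t ≤ n, g t ∈ MSSFin ∧ g t ≠ p3 ∧ Near18 (f t) (g t) ∧ (f t ≠ p3 → g t = f t)) ∧
        (∀ t < n, Near18 (g t) (g (t + 1))) ∧ Near18 (g n) v := by
  induction n with
  | zero =>
    intro v _ _ hv
    refine ⟨f, fun t ht => ?_, fun t ht => absurd ht (Nat.not_lt_zero t), hv⟩
    obtain rfl : t = 0 := Nat.le_zero.mp ht
    exact ⟨hf 0 le_rfl, hf0, Or.inl rfl, fun _ => rfl⟩
  | succ n ih =>
    intro v hvS hv3 hv
    have ih := ih (fun t ht => hf t (by omega)) (fun t ht => hadj t (by omega))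
    have hstep := hadj n (by omega)
    have hfn := hf n (by omega)
    have hfn1 := hf (n + 1) le_rfl
    -- It is enough to find `w` as the new value at time `n + 1`, with a path `g` leading to it.
    suffices h : ∃ w ∈ MSSFin, w ≠ p3 ∧ Near18 (f (n + 1)) w ∧ (f (n + 1) ≠ p3 → w = f (n + 1)) ∧
        Near18 w v ∧ ∃ g : ℕ → ℤ × ℤ × ℤ,
        (∀ t ≤ n, g t ∈ MSSFin ∧ g t ≠ p3 ∧ Near18 (f t) (g t) ∧ (f t ≠ p3 → g t = f t)) ∧
        (∀ t < n, Near18 (g t) (g (t + 1))) ∧ Near18 (g n) w by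
      obtain ⟨w, hwS, hw3, hfw, hwf, hwv, g, hg, hgadj, hgw⟩ := h
      refine ⟨fun t => if t ≤ n then g t else w, fun t ht => ?_, fun t ht => ?_, by simpa using hwv⟩
      · by_cases h : t ≤ n
        · simpa only [if_pos h] using hg t h
        · obtain rfl : t = n + 1 := by omega
          simpa only [if_neg h] using ⟨hwS, hw3, hfw, hwf⟩
      · by_cases h : t < n
        · simpa only [if_pos h.le, if_pos (show t + 1 ≤ n from h)] using hgadj t h
        · obtain rfl : t = n := by omega
          simpa using hgw
    by_cases h1 : f (n + 1) = p3
    · rw [h1] at hstep hv ⊢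
      by_cases h0 : f n = p3
      · -- Inside a run at `p3`: keep the vertex already chosen for the run.
        obtain ⟨g, hg, hgadj, hgv⟩ := ih v hvS hv3 (h0 ▸ hv)
        obtain ⟨hgS, hg3, hfg, -⟩ := hg n le_rfl
        exact ⟨g n, hgS, hg3, h0 ▸ hfg, fun h => absurd rfl h, hgv, g, hg, hgadj, Or.inl rfl⟩
      · -- Entering a run at `p3`, which will be left through `v`.
        obtain ⟨w, hwS, hw3, hxw, hwv, h3w⟩ := exists_detour _ hfn v hvS h0 hv3 hstep hv
        exact ⟨w, hwS, hw3, h3w, fun h => absurd rfl h, hwv, ih w hwS hw3 hxw⟩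
    · exact ⟨f (n + 1), hfn1, h1, Or.inl rfl, fun _ => rfl, hv, ih _ hfn1 h1 hstep⟩

/-- Every (2,18)-continuous loop in MSS₁₈ based at p₆ is 18-nullhomotopic. -/
theorem mss18_loops_18_nullhomotopic :
    ∀ m : ℕ, 0 < m → ∀ f : ℕ → ℤ × ℤ × ℤ,
      (∀ t ≤ m, f t ∈ MSS18) → f 0 = p6 → f m = p6 →
      (∀ t < m, f t = f (t + 1) ∨ adj18 (f t) (f (t + 1))) →
      ∃ k : ℕ, 0 < k ∧ ∃ H : ℕ → ℕ → ℤ × ℤ × ℤ,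
        (∀ t ≤ m, ∀ s ≤ k, H t s ∈ MSS18) ∧
        (∀ t ≤ m, H t 0 = f t) ∧
        (∀ t ≤ m, H t k = p6) ∧
        (∀ s ≤ k, H 0 s = p6 ∧ H m s = p6) ∧
        (∀ s ≤ k, ∀ t < m, H t s = H (t + 1) s ∨ adj18 (H t s) (H (t + 1) s)) ∧
        (∀ t ≤ m, ∀ s < k, H t s = H t (s + 1) ∨ adj18 (H t s) (H t (s + 1))) := by
  intro m _ f hfS hf0 hfm hadj
  have hfF : ∀ t ≤ m, f t ∈ MSSFin := fun t ht => mem_MSS18_iff_s12.mp (hfS t ht)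
  have h63 : p6 ≠ p3 := by decide
  obtain ⟨g, hg, hgadj, -⟩ := exists_avoiding f (hf0 ▸ h63) m hfF hadj p6 (by decide) h63
    (Or.inl hfm)
  have hg0 : g 0 = p6 := ((hg 0 (Nat.zero_le m)).2.2.2 (hf0 ▸ h63)).trans hf0
  have hgm : g m = p6 := ((hg m le_rfl).2.2.2 (hfm ▸ h63)).trans hfm
  have hflat : flatten p6 = p6 := by decide
  have hfold : fold p6 = p6 := by decide
  have hspec := fun t (ht : t ≤ m) => flatten_spec (g t) (hg t ht).1 (hg t ht).2.1
  have hnear := fun t (ht : t < m) => flatten_near (g t) (hg t ht.le).1 (g (t + 1)) (hg (t + 1) ht).1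
    (hg t ht.le).2.1 (hg (t + 1) ht).2.1 (hgadj t ht)
  refine ⟨4, by norm_num, fun t s => match s with
    | 0 => f t
    | 1 => g t
    | 2 => flatten (g t)
    | 3 => fold (flatten (g t))
    | _ => p6, fun t ht s hs => ?_, fun _ _ => rfl, fun _ _ => rfl, fun s hs => ?_,
    fun s hs t ht => ?_, fun t ht s hs => ?_⟩
  · rw [mem_MSS18_iff_s12]
    interval_cases s
    · exact hfF t ht
    · exact (hg t ht).1
    · exact (hspec t ht).1
    · exact (hspec t ht).2.1
    · exact (by decide : p6 ∈ MSSFin)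
  · interval_cases s <;> simp [hf0, hfm, hg0, hgm, hflat, hfold]
  · interval_cases s
    · exact hadj t ht
    · exact hgadj t ht
    · exact (hnear t ht).1
    · exact (hnear t ht).2
    · exact Or.inl rfl
  · interval_cases s
    · exact (hg t ht).2.2.1
    · exact (hspec t ht).2.2.1
    · exact (hspec t ht).2.2.2.1
    · exact (hspec t ht).2.2.2.2
end
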